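/- Let T and T* be finite trees, each with at least 3 vertices, let v be a vertex of T that is not a leaf, and let v* be a vertex of T* that is not a leaf. Then the set R = (L(T) × {v*}) ∪ ({v} × L(T*)) is a general position set of the Cartesian product T □ T*. -/

import Mathlib

open SimpleGraph

/-- A set `S` of vertices of `G` is a general position set if for every three
pairwise-distinct vertices `x, y, z ∈ S` one has `d(x,y) ≠ d(x,z) + d(z,y)`. -/
def IsGenPosSet {V : Type*} (G : SimpleGraph V) (S : Set V) : Prop :=
  ∀ x ∈ S, ∀ y ∈ S, ∀ z ∈ S, x ≠ y → x ≠ z → y ≠ z →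
    G.dist x y ≠ G.dist x z + G.dist z y

/-- The general position number of a graph on a finite vertex type: the
cardinality of a largest general position set. -/
noncomputable def genPosNum {V : Type*} [Fintype V] (G : SimpleGraph V) : ℕ :=
  sSup {n | ∃ S : Finset V, IsGenPosSet G ↑S ∧ S.card = n}

/-- A vertex is a leaf if it has exactly one neighbour (degree 1). -/
def IsLeaf {V : Type*} (G : SimpleGraph V) (v : V) : Prop :=
  ∃! w, G.Adj v w

/-- The distance in a box product of connected graphs is the sum of the distances in the factors. -/
lemma SimpleGraph.Connected.dist_boxProd {V W : Type*} {G : SimpleGraph V} {H : SimpleGraph W}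
    (hG : G.Connected) (hH : H.Connected) (x y : V × W) :
    (G □ H).dist x y = G.dist x.1 y.1 + H.dist x.2 y.2 := by
  have h := edist_boxProd (G := G) (H := H) x y
  rw [← ((hG.boxProd hH) x y).coe_dist_eq_edist, ← (hG x.1 y.1).coe_dist_eq_edist,
    ← (hH x.2 y.2).coe_dist_eq_edist] at h
  exact_mod_cast h

/-- In a connected graph, every vertex other than a leaf is closer to the neighbour of that leaf
than to the leaf itself. -/
lemma IsLeaf.dist_add_one_le {V : Type*} {G : SimpleGraph V} (hG : G.Connected) {w z : V}
    (hz : IsLeaf G z) (hw : G.Adj z w) {x : V} (hx : x ≠ z) : G.dist w x + 1 ≤ G.dist z x := by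
  obtain ⟨p, hp⟩ := hG.exists_walk_length_eq_dist z x
  cases p with
  | nil => exact absurd rfl hx
  | cons h q =>
    obtain rfl := hz.unique h hw
    rw [← hp, Walk.length_cons]
    exact Nat.add_le_add_right (dist_le q) 1

/-- A leaf of a connected graph lies strictly between no two other vertices. -/
lemma IsLeaf.dist_lt_add {V : Type*} {G : SimpleGraph V} (hG : G.Connected) {x y z : V}
    (hz : IsLeaf G z) (hx : x ≠ z) (hy : y ≠ z) : G.dist x y < G.dist x z + G.dist z y := by
  obtain ⟨w, hw, -⟩ := id hz
  have h₁ := hz.dist_add_one_le hG hw hx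
  have h₂ := hz.dist_add_one_le hG hw hy
  have h₃ : G.dist x y ≤ G.dist x w + G.dist w y := hG.dist_triangle
  rw [dist_comm (u := x) (v := w)] at h₃
  rw [dist_comm (u := x) (v := z)]
  omega

/-- For trees `T, T*` on at least 3 vertices, a non-leaf `v` of `T` and a
non-leaf `v*` of `T*`, the set `(L(T) × {v*}) ∪ ({v} × L(T*))` is a general
position set of `T □ T*`. -/
theorem genPos_leaves_cross {V W : Type*} [Fintype V] [Fintype W]
    (T : SimpleGraph V) (T' : SimpleGraph W)
    (hT : T.IsTree) (hT' : T'.IsTree)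
    (hV : 3 ≤ Fintype.card V) (hW : 3 ≤ Fintype.card W)
    (v : V) (hv : ¬ IsLeaf T v) (v' : W) (hv' : ¬ IsLeaf T' v') :
    IsGenPosSet (T □ T')
      (({x : V | IsLeaf T x} ×ˢ {v'}) ∪ ({v} ×ˢ {y : W | IsLeaf T' y})) := by
  have hne : ∀ {l : V}, IsLeaf T l → v ≠ l := by
    rintro l hl rfl
    exact hv hl
  have hne' : ∀ {l : W}, IsLeaf T' l → v' ≠ l := by
    rintro l hl rfl
    exact hv' hl
  rintro ⟨x₁, x₂⟩ hx ⟨y₁, y₂⟩ hy ⟨z₁, z₂⟩ hz - hxz hyz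
  rw [hT.connected.dist_boxProd hT'.connected, hT.connected.dist_boxProd hT'.connected,
    hT.connected.dist_boxProd hT'.connected]
  have h₁ : T.dist x₁ y₁ ≤ T.dist x₁ z₁ + T.dist z₁ y₁ := hT.connected.dist_triangle
  have h₂ : T'.dist x₂ y₂ ≤ T'.dist x₂ z₂ + T'.dist z₂ y₂ := hT'.connected.dist_triangle
  simp only [Set.mem_union, Set.mem_prod, Set.mem_ofPred_eq, Set.mem_singleton_iff] at hx hy hz
  obtain ⟨hz, rfl⟩ | ⟨rfl, hz⟩ := hz
  · have hx₁ : x₁ ≠ z₁ := by grind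
    have hy₁ : y₁ ≠ z₁ := by grind
    have := hz.dist_lt_add hT.connected hx₁ hy₁
    dsimp only
    omega
  · have hx₂ : x₂ ≠ z₂ := by grind
    have hy₂ : y₂ ≠ z₂ := by grind
    have := hz.dist_lt_add hT'.connected hx₂ hy₂
    dsimp only
    omega
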